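/- Let ⟨A|R⟩ be a strongly C(4) presentation. Then the monoid presented is left cancellative if and only if R contains no relation of the form (ar, as) where a ∈ A and r, s are words over A. -/

import Mathlib

open FreeMonoid

/-- The congruence on the free monoid generated by a presentation `R`. -/
def presCon {A : Type*} (R : Set (FreeMonoid A × FreeMonoid A)) : Con (FreeMonoid A) :=
  conGen fun u v => (u, v) ∈ R

/-- `w` is a relation word of the presentation `R`. -/
def IsRelWord {A : Type*} (R : Set (FreeMonoid A × FreeMonoid A)) (w : FreeMonoid A) : Prop :=
  ∃ p ∈ R, p.1 = w ∨ p.2 = w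

/-- `u` is a factor of `w`. -/
def IsFactor {A : Type*} (u w : FreeMonoid A) : Prop := ∃ p q, w = p * u * q

/-- `u` is a piece of the presentation `R`: it is empty, or occurs as a factor of two
distinct relation words, or in two different (possibly overlapping) positions within
one relation word. -/
def IsPiece {A : Type*} (R : Set (FreeMonoid A × FreeMonoid A)) (u : FreeMonoid A) : Prop :=
  u = 1 ∨
  (∃ w₁ w₂, IsRelWord R w₁ ∧ IsRelWord R w₂ ∧ w₁ ≠ w₂ ∧ IsFactor u w₁ ∧ IsFactor u w₂) ∨
  (∃ w, IsRelWord R w ∧ ∃ p q p' q', w = p * u * q ∧ w = p' * u * q' ∧ p ≠ p')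

/-- The small overlap condition `C(m)`: no relation word is a product of strictly fewer
than `m` pieces. -/
def SmallOverlapC {A : Type*} (R : Set (FreeMonoid A × FreeMonoid A)) (m : ℕ) : Prop :=
  ∀ w, IsRelWord R w → ∀ l : List (FreeMonoid A),
    (∀ x ∈ l, IsPiece R x) → l.prod = w → m ≤ l.length

/-- No repeated relation words: no word occurs as a side of two distinct relations or
as both sides of a single relation. -/
def NoRepeatedRelWords {A : Type*} (R : Set (FreeMonoid A × FreeMonoid A)) : Prop :=
  (∀ p ∈ R, p.1 ≠ p.2) ∧
  (∀ p ∈ R, ∀ q ∈ R, p ≠ q → p.1 ≠ q.1 ∧ p.1 ≠ q.2 ∧ p.2 ≠ q.1 ∧ p.2 ≠ q.2)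

/-- The strong small overlap condition: C(m) together with no repeated relation words. -/
def StronglyC {A : Type*} (R : Set (FreeMonoid A × FreeMonoid A)) (m : ℕ) : Prop :=
  SmallOverlapC R m ∧ NoRepeatedRelWords R

/-!
Suppose no relation has two sides with the same first letter, and follow the initial letter `a` of
`a * u` through a chain of rewritings ending in `a * v`. If `a` is rewritten, being the first letter
of `P` in `P ↦ Q`, then the new first letter differs from `a`, so it has to be rewritten in turn.
Until that happens, only proper suffixes of `Q` are affected, and by `C(3)` what survives of `Q`
is a prefix that is not a piece. The relation word replaced next at the front shares this prefix, so
it is `Q`, and replacing it restores `P`: rewriting `a` is a detour that leaves the class of the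
remaining word unchanged.

Conversely, if `(a * r, a * s)` is a relation, then `a * r` has no relation word inside `r`, since
that relation word would be a piece; so nothing but `r` is congruent to `r`, while `s ≠ r`.
-/

section Words

variable {A : Type*}

theorem freeMonoid_mul_eq_mul_iff {a b c d : FreeMonoid A} :
    a * b = c * d ↔ (∃ e, c = a * e ∧ b = e * d) ∨ ∃ e, a = c * e ∧ d = e * b :=
  List.append_eq_append_iff

theorem of_mul_eq_of_mul_iff {a b : A} {u v : FreeMonoid A} :
    of a * u = of b * v ↔ a = b ∧ u = v :=
  List.cons_eq_cons

theorem exists_eq_of_mul_of_ne_one {u : FreeMonoid A} (hu : u ≠ 1) : ∃ a v, u = of a * v :=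
  List.ne_nil_iff_exists_cons.1 hu

theorem of_mul_ne_one (a : A) (u : FreeMonoid A) : of a * u ≠ 1 :=
  List.cons_ne_nil a u

end Words

section Presentation

variable {A : Type*} {R : Set (FreeMonoid A × FreeMonoid A)}

/-- The two sides of a relation, in either order, are complements of each other. -/
def IsComplement (R : Set (FreeMonoid A × FreeMonoid A)) (P Q : FreeMonoid A) : Prop :=
  (P, Q) ∈ R ∨ (Q, P) ∈ R

namespace IsComplement

variable {P Q Q' : FreeMonoid A}

theorem symm (h : IsComplement R P Q) : IsComplement R Q P :=
  Or.symm h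

theorem isRelWord_left (h : IsComplement R P Q) : IsRelWord R P :=
  h.elim (fun h => ⟨_, h, .inl rfl⟩) fun h => ⟨_, h, .inr rfl⟩

theorem isRelWord_right (h : IsComplement R P Q) : IsRelWord R Q :=
  h.symm.isRelWord_left

protected theorem presCon (h : IsComplement R P Q) : _root_.presCon R P Q :=
  h.elim (fun h => ConGen.Rel.of _ _ h) fun h => (ConGen.Rel.of _ _ h).symm

theorem unique (hN : NoRepeatedRelWords R) (h : IsComplement R P Q) (h' : IsComplement R P Q') :
    Q = Q' := by
  obtain ⟨hsides, hdistinct⟩ := hN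
  grind [IsComplement]

theorem exists_mem_of_first_letter_eq {a : A} {r s : FreeMonoid A}
    (h : IsComplement R (of a * r) (of a * s)) :
    ∃ (a : A) (r s : FreeMonoid A), (of a * r, of a * s) ∈ R :=
  h.elim (fun h => ⟨a, r, s, h⟩) fun h => ⟨a, s, r, h⟩

end IsComplement

theorem presCon_induction {Φ : FreeMonoid A → Prop}
    (hΦ : ∀ x P Q y, IsComplement R P Q → Φ (x * P * y) → Φ (x * Q * y))
    {u v : FreeMonoid A} (h : presCon R u v) (hu : Φ u) : Φ v := by
  have hcontext : ∀ x y, Φ (x * u * y) ↔ Φ (x * v * y) := by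
    clear hu
    replace h : ConGen.Rel (fun u v => (u, v) ∈ R) u v := h
    induction h with
    | of P Q h => exact fun x y => ⟨hΦ x P Q y (.inl h), hΦ x Q P y (.inr h)⟩
    | refl => exact fun _ _ => Iff.rfl
    | symm _ ih => exact fun x y => (ih x y).symm
    | trans _ _ ih₁ ih₂ => exact fun x y => (ih₁ x y).trans (ih₂ x y)
    | @mul u₁ v₁ u₂ v₂ _ _ ih₁ ih₂ =>
      intro x y
      have h₁ := ih₁ x (u₂ * y)
      have h₂ := ih₂ (x * v₁) y
      simp only [mul_assoc] at h₁ h₂ ⊢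
      exact h₁.trans h₂
  simpa using (hcontext 1 1).1 (by simpa using hu)

section Pieces

theorem SmallOverlapC.mono {m n : ℕ} (hmn : m ≤ n) (hC : SmallOverlapC R n) : SmallOverlapC R m :=
  fun w hw l hl hlw => hmn.trans (hC w hw l hl hlw)

theorem SmallOverlapC.not_isPiece {P : FreeMonoid A} (hC : SmallOverlapC R 2)
    (hP : IsRelWord R P) : ¬ IsPiece R P :=
  fun h => absurd (hC P hP [P] (by simpa) (by simp)) (by simp)

theorem SmallOverlapC.ne_one {P : FreeMonoid A} (hC : SmallOverlapC R 2) (hP : IsRelWord R P) :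
    P ≠ 1 :=
  fun h => hC.not_isPiece hP (.inl h)

theorem SmallOverlapC.not_isPiece_right {u v : FreeMonoid A} (hC : SmallOverlapC R 3)
    (h : IsRelWord R (u * v)) (hu : IsPiece R u) : ¬ IsPiece R v :=
  fun hv => absurd (hC (u * v) h [u, v] (by simp [hu, hv]) (by simp)) (by simp)

theorem isPiece_of_inner_of_prefix {p u q v : FreeMonoid A} (hp : p ≠ 1)
    (hinner : IsRelWord R (p * u * q)) (hprefix : IsRelWord R (u * v)) : IsPiece R u := by
  by_cases h : p * u * q = u * v
  · exact .inr (.inr ⟨_, hinner, p, q, 1, v, rfl, by simpa using h, hp⟩)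
  · exact .inr (.inl ⟨_, _, hinner, hprefix, h, ⟨p, q, rfl⟩, ⟨1, v, by simp⟩⟩)

theorem eq_of_common_prefix {p q q' : FreeMonoid A} (h : IsRelWord R (p * q))
    (h' : IsRelWord R (p * q')) (hp : ¬ IsPiece R p) : q = q' := by
  by_contra hne
  exact hp (.inr (.inl ⟨_, _, h, h', fun h => hne (mul_left_cancel h),
    ⟨1, q, by simp⟩, ⟨1, q', by simp⟩⟩))

/-- Every prefix of a relation word that occurs in `z`, other than at the end of `z`, is a piece.
This is what single letters and proper suffixes of relation words have in common. -/
def InnerOverlapsArePieces (R : Set (FreeMonoid A × FreeMonoid A)) (z : FreeMonoid A) : Prop :=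
  ∀ x u e v, z = x * u * e → e ≠ 1 → IsRelWord R (u * v) → IsPiece R u

theorem innerOverlapsArePieces_of (a : A) : InnerOverlapsArePieces R (of a) := by
  intro x u e v hz he _
  have hlen := congrArg FreeMonoid.length hz
  have he' : e.length ≠ 0 := mt FreeMonoid.length_eq_zero.1 he
  simp only [FreeMonoid.length_of, FreeMonoid.length_mul] at hlen
  exact .inl (FreeMonoid.length_eq_zero.1 (by lia))

theorem IsRelWord.innerOverlapsArePieces {c : A} {q : FreeMonoid A}
    (h : IsRelWord R (of c * q)) : InnerOverlapsArePieces R q := by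
  rintro x u e v rfl - huv
  exact isPiece_of_inner_of_prefix (of_mul_ne_one c x) (q := e) (by simpa [mul_assoc] using h) huv

theorem InnerOverlapsArePieces.eq_one_of_eq_mul_relWord {x y z V : FreeMonoid A}
    (hz : InnerOverlapsArePieces R z) (hC : SmallOverlapC R 2) (hV : IsRelWord R V)
    (h : z = x * V * y) : y = 1 := by
  by_contra hy
  exact hC.not_isPiece hV (hz x V y 1 h hy (by simpa using hV))

theorem eq_of_presCon_of_proper_suffix (hC : SmallOverlapC R 2) {p r s : FreeMonoid A}
    (hp : p ≠ 1) (hpr : IsRelWord R (p * r)) (hrs : presCon R r s) : s = r := by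
  refine presCon_induction (Φ := (· = r)) (fun x P Q y hPQ hr => ?_) hrs rfl
  have hpx : p * x ≠ 1 := mt LeftCancelMonoid.eq_one_of_mul_right hp
  refine absurd ?_ (hC.not_isPiece hPQ.isRelWord_left)
  exact isPiece_of_inner_of_prefix (q := y) (v := 1) hpx
    (by simpa [← hr, mul_assoc] using hpr) (by simpa using hPQ.isRelWord_left)

end Pieces

/-- `OverlapChain R z t w` records how `w` arises from `z * t` by rewriting: either `z` is intact
and only `t` has changed, or a nonempty suffix `e` of `z` was used up as the beginning of a relation
word `e * f`, whose complement `of c * q` took its place, and from then on `of c` has stayed while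
`q` and what follows it are again in this situation. -/
inductive OverlapChain (R : Set (FreeMonoid A × FreeMonoid A)) :
    FreeMonoid A → FreeMonoid A → FreeMonoid A → Prop
  | intact {z t t'} : presCon R t t' → OverlapChain R z t (z * t')
  | overlap {x e f c q t t' s} : e ≠ 1 → IsComplement R (e * f) (of c * q) →
      presCon R t (f * t') → OverlapChain R q t' s → OverlapChain R (x * e) t (x * (of c * s))

namespace OverlapChain

variable {z q t s V V' x y : FreeMonoid A} {c : A}

theorem exists_common_prefix (hC : SmallOverlapC R 3) (hQ : IsRelWord R (of c * q))
    (h : OverlapChain R q t s) :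
    ∃ p r s', of c * q = p * r ∧ of c * s = p * s' ∧ ¬ IsPiece R p := by
  cases h with
  | @intact _ _ t' _ =>
    exact ⟨of c * q, 1, t', by simp, (mul_assoc ..).symm, (hC.mono (by lia)).not_isPiece hQ⟩
  | @overlap x e f c' q' _ _ s _ hcompl _ _ =>
    rw [← mul_assoc] at hQ
    refine ⟨of c * x, e, of c' * s, (mul_assoc ..).symm, (mul_assoc ..).symm, fun hpiece => ?_⟩
    exact hC.not_isPiece_right hQ hpiece <|
      isPiece_of_inner_of_prefix (q := 1) (of_mul_ne_one c x) (by simpa using hQ)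
        hcompl.isRelWord_left

theorem relWord_eq (hC : SmallOverlapC R 3) (hQ : IsRelWord R (of c * q)) (hV : IsRelWord R V)
    (h : OverlapChain R q t s) (hs : of c * s = V * y) : V = of c * q := by
  obtain ⟨p, r, s', hq, hs', hp⟩ := h.exists_common_prefix hC hQ
  rw [hq] at hQ ⊢
  rcases freeMonoid_mul_eq_mul_iff.1 (hs'.symm.trans hs) with ⟨e, rfl, -⟩ | ⟨e, rfl, -⟩
  · rw [eq_of_common_prefix hV hQ hp]
  · have hVpiece := (hC.mono (by lia)).not_isPiece hV
    rw [mul_assoc] at hQ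
    rw [mul_assoc, ← eq_of_common_prefix (q := 1) (by simpa using hV) hQ hVpiece, mul_one]

theorem presCon_of_eq_mul (hR : ¬ ∃ (a : A) (r s : FreeMonoid A), (of a * r, of a * s) ∈ R)
    (h : OverlapChain R z t s) (hs : s = z * y) : presCon R t y := by
  cases h with
  | intact ht => rwa [← mul_left_cancel hs]
  | @overlap x e f c q _ _ s he hcompl _ _ =>
    obtain ⟨a, e', rfl⟩ := exists_eq_of_mul_of_ne_one he
    simp only [mul_assoc] at hs hcompl
    obtain ⟨rfl, -⟩ := of_mul_eq_of_mul_iff.1 (mul_left_cancel hs)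
    exact absurd hcompl.exists_mem_of_first_letter_eq hR

/-- If `u` were a piece, then by `C(3)` the rest `v` would not be one, so `v` would
cover the prefix of `of c * q` from `exists_common_prefix` and make that prefix a piece. -/
theorem not_isPiece_of_mul_eq {u v : FreeMonoid A} (hC : SmallOverlapC R 3)
    (hQ : IsRelWord R (of c * q)) (h : OverlapChain R q t s) (hu : u ≠ 1)
    (huv : IsRelWord R (u * v)) (hv : v * y = of c * s) : ¬ IsPiece R u := by
  intro hupiece
  obtain ⟨p, r, s', hq, hs', hp⟩ := h.exists_common_prefix hC hQ
  rw [hq] at hQ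
  rcases freeMonoid_mul_eq_mul_iff.1 (hv.trans hs') with ⟨g, rfl, -⟩ | ⟨g, rfl, -⟩
  · rw [mul_assoc] at hQ
    exact hC.not_isPiece_right huv hupiece <|
      isPiece_of_inner_of_prefix (q := 1) hu (by simpa using huv) hQ
  · exact hp (isPiece_of_inner_of_prefix hu (by simpa [mul_assoc] using huv) hQ)

theorem rewrite_of_intact (hC : SmallOverlapC R 2) (hz : InnerOverlapsArePieces R z)
    (hV : IsComplement R V V') {t' : FreeMonoid A} (ht : presCon R t t')
    (h : z * t' = x * (V * y)) : OverlapChain R z t (x * (V' * y)) := by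
  have intact_of_prefix : ∀ g, x = z * g → OverlapChain R z t (x * (V' * y)) := by
    rintro g rfl
    simp only [mul_assoc, mul_right_inj] at h ⊢
    subst h
    refine intact (ht.trans ?_)
    exact ((presCon R).refl g).mul (hV.presCon.mul ((presCon R).refl y))
  rcases freeMonoid_mul_eq_mul_iff.1 h with ⟨g, hx, -⟩ | ⟨e, rfl, hVy⟩
  · exact intact_of_prefix g hx
  obtain rfl | he := eq_or_ne e 1
  · exact intact_of_prefix 1 (by simp)
  obtain ⟨f, rfl, rfl⟩ : ∃ f, V = e * f ∧ t' = f * y := by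
    rcases freeMonoid_mul_eq_mul_iff.1 hVy with ⟨g, rfl, rfl⟩ | hf
    · obtain rfl := hz.eq_one_of_eq_mul_relWord hC hV.isRelWord_left (mul_assoc ..).symm
      exact ⟨1, by simp⟩
    · exact hf
  obtain ⟨c, q, rfl⟩ := exists_eq_of_mul_of_ne_one (hC.ne_one hV.isRelWord_right)
  rw [mul_assoc]
  exact overlap he hV ht (intact ((presCon R).refl y))

theorem rewrite_of_eq_mul (hC : SmallOverlapC R 3) (hN : NoRepeatedRelWords R)
    (hR : ¬ ∃ (a : A) (r s : FreeMonoid A), (of a * r, of a * s) ∈ R)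
    {e f t' : FreeMonoid A} (hcompl : IsComplement R (e * f) (of c * q))
    (ht : presCon R t (f * t')) (h : OverlapChain R q t' s) (hV : IsComplement R V V')
    (hs : of c * s = V * y) : OverlapChain R (x * e) t (x * (V' * y)) := by
  obtain rfl : V = of c * q := h.relWord_eq hC hcompl.isRelWord_right hV.isRelWord_left hs
  obtain rfl : V' = e * f := hV.unique hN hcompl.symm
  rw [mul_assoc, mul_right_inj] at hs
  have htail : presCon R t' y := h.presCon_of_eq_mul hR hs
  have hword : x * (e * f * y) = x * e * (f * y) := by simp only [mul_assoc]
  rw [hword]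
  exact intact (ht.trans (((presCon R).refl f).mul htail))

theorem rewrite (hC : SmallOverlapC R 3) (hN : NoRepeatedRelWords R)
    (hR : ¬ ∃ (a : A) (r s : FreeMonoid A), (of a * r, of a * s) ∈ R)
    (hz : InnerOverlapsArePieces R z) (hV : IsComplement R V V')
    (h : OverlapChain R z t (x * (V * y))) : OverlapChain R z t (x * (V' * y)) := by
  generalize hw : x * (V * y) = w at h
  induction h generalizing x with
  | intact ht => exact rewrite_of_intact (hC.mono (by lia)) hz hV ht hw.symm
  | @overlap x₀ e f c q t t' s he hcompl ht hchain ih =>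
    have hQ := hcompl.isRelWord_right
    obtain rfl | hx := eq_or_ne x x₀
    · exact rewrite_of_eq_mul hC hN hR hcompl ht hchain hV (mul_left_cancel hw).symm
    rcases freeMonoid_mul_eq_mul_iff.1 hw with ⟨u, rfl, hVy⟩ | ⟨u, rfl, hs⟩
    · exfalso
      have hu : u ≠ 1 := by simpa [eq_comm] using hx
      rcases freeMonoid_mul_eq_mul_iff.1 hVy with ⟨g, rfl, -⟩ | ⟨v, rfl, hv⟩
      · have hge : g * e = 1 := hz.eq_one_of_eq_mul_relWord (hC.mono (by lia)) (x := x)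
          hV.isRelWord_left (by simp only [mul_assoc])
        exact he (LeftCancelMonoid.eq_one_of_mul_left hge)
      · have hupiece : IsPiece R u := hz x u e v rfl he hV.isRelWord_left
        exact hchain.not_isPiece_of_mul_eq hC hQ hu hV.isRelWord_left hv.symm hupiece
    · obtain ⟨b, u, rfl⟩ := exists_eq_of_mul_of_ne_one (u := u) (by simpa using hx)
      rw [mul_assoc] at hs
      obtain ⟨rfl, rfl⟩ := of_mul_eq_of_mul_iff.1 hs
      simp only [mul_assoc]
      exact overlap he hcompl ht (ih hQ.innerOverlapsArePieces rfl)

end OverlapChain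

theorem presCon_of_presCon_of_mul (hC : SmallOverlapC R 3) (hN : NoRepeatedRelWords R)
    (hR : ¬ ∃ (a : A) (r s : FreeMonoid A), (of a * r, of a * s) ∈ R)
    {a : A} {u v : FreeMonoid A} (h : presCon R (of a * u) (of a * v)) : presCon R u v := by
  have hchain : OverlapChain R (of a) u (of a * v) := by
    refine presCon_induction (fun x P Q y hPQ hP => ?_) h (.intact ((presCon R).refl u))
    rw [mul_assoc] at hP ⊢
    exact hP.rewrite hC hN hR (innerOverlapsArePieces_of a) hPQ
  exact hchain.presCon_of_eq_mul hR rfl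

theorem presCon_of_presCon_mul_left (hC : SmallOverlapC R 3) (hN : NoRepeatedRelWords R)
    (hR : ¬ ∃ (a : A) (r s : FreeMonoid A), (of a * r, of a * s) ∈ R)
    {x y z : FreeMonoid A} (h : presCon R (x * y) (x * z)) : presCon R y z := by
  induction x using FreeMonoid.inductionOn' with
  | one => simpa using h
  | of_mul a x ih =>
    rw [mul_assoc, mul_assoc] at h
    exact ih (presCon_of_presCon_of_mul hC hN hR h)

end Presentation

theorem statement15_general {A : Type*} (R : Set (FreeMonoid A × FreeMonoid A))
    (hC : StronglyC R 3) :
    (∀ x y z : (presCon R).Quotient, x * y = x * z → y = z) ↔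
      ¬ ∃ (a : A) (r s : FreeMonoid A), (of a * r, of a * s) ∈ R := by
  obtain ⟨hC, hN⟩ := hC
  constructor
  · rintro hcancel ⟨a, r, s, hars⟩
    have hrs : presCon R r s :=
      (presCon R).eq.1 (hcancel (of a : FreeMonoid A) r s ((presCon R).eq.2 (.of _ _ hars)))
    have hsr : s = r := eq_of_presCon_of_proper_suffix (hC.mono (by lia)) (of_ne_one a)
      ⟨_, hars, .inl rfl⟩ hrs
    exact hN.1 _ hars (by rw [hsr])
  · rintro hR ⟨x⟩ ⟨y⟩ ⟨z⟩ hxyz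
    exact (presCon R).eq.2 (presCon_of_presCon_mul_left hC hN hR ((presCon R).eq.1 hxyz))

/-- **Corollary.** The monoid presented by a strongly C(4) presentation `⟨A|R⟩` is left
cancellative if and only if `R` contains no relation of the form `(a r, a s)` with
`a ∈ A` and `r, s` words. -/
theorem statement15 {A : Type*} (R : Set (FreeMonoid A × FreeMonoid A))
    (hC : StronglyC R 4) :
    (∀ x y z : (presCon R).Quotient, x * y = x * z → y = z) ↔
      ¬ ∃ (a : A) (r s : FreeMonoid A), (of a * r, of a * s) ∈ R :=
  statement15_general R ⟨hC.1.mono (by lia), hC.2⟩
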